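/- Let d ≥ 2 be an integer, let g ∈ ℝ^d be a unit vector, let u be uniformly distributed on the unit sphere S^{d-1} ⊂ ℝ^d, and let s ∈ [0,1]. Then E[⟨g,u⟩·1{⟨g,u⟩ ≥ -s}] = Γ(d/2)·(1-s²)^{(d-1)/2} / (2√π·Γ((d+1)/2)) and E[⟨g,u⟩·1{⟨g,u⟩ ≤ -s}] = −Γ(d/2)·(1-s²)^{(d-1)/2} / (2√π·Γ((d+1)/2)). -/

import Mathlib

open MeasureTheory Metric Set Real
open scoped RealInnerProductSpace

/-- The uniform (normalized rotation-invariant) probability measure on the unit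
sphere `S^{d-1} ⊂ ℝ^d`. -/
noncomputable def sphereUniform (d : ℕ) :
    Measure (sphere (0 : EuclideanSpace ℝ (Fin d)) 1) :=
  ((volume : Measure (EuclideanSpace ℝ (Fin d))).toSphere univ)⁻¹ •
    (volume : Measure (EuclideanSpace ℝ (Fin d))).toSphere

/-!
Integrate the Gaussian weight `exp (-‖x‖ ^ 2)` against the function equal to `⟪g, x⟫` on the
circular cone `a * ‖x‖ ≤ ⟪g, x⟫` and to `0` off it. This function is homogeneous of degree one, so
polar coordinates turn the integral into the wanted average over the sphere times a Gamma factor.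
In cylindrical coordinates `x = t • g + y` with `y ⟂ g` the cone becomes
`a / √(1 - a ^ 2) * ‖y‖ ≤ t`; the integral over `t` is then elementary and leaves a Gaussian
integral over `y`.
-/

open Module

section PolarCoordinates

variable {E F : Type*} [NormedAddCommGroup E] [MeasurableSpace E] [BorelSpace E]
  [NormedAddCommGroup F] [NormedSpace ℝ F]

lemma integral_volumeIoiPow (n : ℕ) (k : ℝ → F) :
    ∫ r, k r ∂Measure.volumeIoiPow n = ∫ r in Ioi (0 : ℝ), r ^ n • k r := by
  rw [Measure.volumeIoiPow, integral_withDensity_eq_integral_toReal_smul (by fun_prop) (by simp),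
    ← integral_subtype_comap measurableSet_Ioi fun r : ℝ ↦ r ^ n • k r]
  refine integral_congr_ae (.of_forall fun r ↦ ?_)
  simp only [ENNReal.toReal_ofReal (pow_nonneg r.2.out.le n)]

section Normed

variable [NormedSpace ℝ E] [FiniteDimensional ℝ E] [Nontrivial E] (μ : Measure E)
  [μ.IsAddHaarMeasure]

lemma integral_eq_integral_Ioi_smul_integral_toSphere {f : E → F} {k : ℝ → ℝ}
    {h : sphere (0 : E) 1 → F} (hf : ∀ (u : sphere (0 : E) 1) (r : ℝ), 0 < r →
      f (r • (u : E)) = k r • h u) :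
    ∫ x, f x ∂μ = (∫ r in Ioi (0 : ℝ), r ^ (finrank ℝ E - 1) * k r) • ∫ u, h u ∂μ.toSphere := by
  have polar (x : ({0}ᶜ : Set E)) :
      f x = k (homeomorphUnitSphereProd E x).2 • h (homeomorphUnitSphereProd E x).1 := by
    rw [← hf _ _ (homeomorphUnitSphereProd E x).2.2, ← homeomorphUnitSphereProd_symm_apply_coe,
      Homeomorph.symm_apply_apply]
  calc
    ∫ x, f x ∂μ = ∫ x : ({0}ᶜ : Set E), f x ∂μ.comap (↑) := by
      rw [integral_subtype_comap (measurableSet_singleton _).compl, restrict_compl_singleton]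
    _ = ∫ p, k p.2 • h p.1 ∂μ.toSphere.prod (.volumeIoiPow (finrank ℝ E - 1)) := by
      simp_rw [polar]
      exact μ.measurePreserving_homeomorphUnitSphereProd.integral_comp
        (Homeomorph.measurableEmbedding _) fun p ↦ k p.2 • h p.1
    _ = ∫ p, k p.1 • h p.2 ∂(Measure.volumeIoiPow (finrank ℝ E - 1)).prod μ.toSphere :=
      (integral_prod_swap _).symm
    _ = (∫ r, k r ∂Measure.volumeIoiPow (finrank ℝ E - 1)) • ∫ u, h u ∂μ.toSphere :=
      integral_prod_smul (fun r : Ioi (0 : ℝ) ↦ k r) h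
    _ = _ := by simp only [integral_volumeIoiPow, smul_eq_mul]

lemma integral_exp_neg_norm_sq_smul_of_homogeneous {f : E → F} {m : ℝ}
    (hm : -finrank ℝ E < m) (hf : ∀ (x : E) (r : ℝ), 0 < r → f (r • x) = r ^ m • f x) :
    ∫ x, rexp (-‖x‖ ^ 2) • f x ∂μ =
      (Gamma ((finrank ℝ E + m) / 2) / 2) • ∫ u : sphere (0 : E) 1, f u ∂μ.toSphere := by
  have polar (u : sphere (0 : E) 1) (r : ℝ) (hr : 0 < r) :
      rexp (-‖r • (u : E)‖ ^ 2) • f (r • (u : E)) = (r ^ m * rexp (-r ^ 2)) • f u := by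
    rw [hf _ _ hr, smul_smul, norm_smul, norm_eq_of_mem_sphere, mul_one, norm_of_nonneg hr.le,
      mul_comm]
  have hdim : ((finrank ℝ E - 1 : ℕ) : ℝ) = finrank ℝ E - 1 := Nat.cast_pred finrank_pos
  rw [integral_eq_integral_Ioi_smul_integral_toSphere μ polar]
  congr 1
  calc
    ∫ r in Ioi (0 : ℝ), r ^ (finrank ℝ E - 1) * (r ^ m * rexp (-r ^ 2))
      = ∫ r in Ioi (0 : ℝ), r ^ (finrank ℝ E - 1 + m : ℝ) * rexp (-r ^ (2 : ℝ)) := by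
        refine setIntegral_congr_fun measurableSet_Ioi fun r hr ↦ ?_
        simp only [rpow_add hr.out, ← hdim, rpow_natCast, rpow_two, mul_assoc]
    _ = Gamma ((finrank ℝ E + m) / 2) / 2 := by
        rw [integral_rpow_mul_exp_neg_rpow two_pos (by linarith)]
        ring_nf

end Normed

variable [InnerProductSpace ℝ E] [FiniteDimensional ℝ E]

lemma integral_exp_neg_norm_sq : ∫ x : E, rexp (-‖x‖ ^ 2) = π ^ (finrank ℝ E / 2 : ℝ) := by
  simpa using GaussianFourier.integral_rexp_neg_mul_sq_norm (V := E) one_pos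

variable [Nontrivial E]

lemma toSphere_volume_real_univ_mul_Gamma :
    (volume : Measure E).toSphere.real univ * Gamma (finrank ℝ E / 2) =
      2 * π ^ (finrank ℝ E / 2 : ℝ) := by
  have h := integral_exp_neg_norm_sq_smul_of_homogeneous (volume : Measure E)
    (f := fun _ ↦ (1 : ℝ)) (m := 0) (by simp [finrank_pos]) (by simp)
  simp only [smul_eq_mul, mul_one, integral_exp_neg_norm_sq, add_zero,
    integral_const] at h
  linarith

lemma average_toSphere_of_homogeneous {f : E → F} {m : ℝ} (hm : -finrank ℝ E < m)
    (hf : ∀ (x : E) (r : ℝ), 0 < r → f (r • x) = r ^ m • f x) :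
    ⨍ u : sphere (0 : E) 1, f u ∂(volume : Measure E).toSphere =
      (Gamma (finrank ℝ E / 2) / (π ^ (finrank ℝ E / 2 : ℝ) * Gamma ((finrank ℝ E + m) / 2))) •
        ∫ x, rexp (-‖x‖ ^ 2) • f x := by
  have hmass := toSphere_volume_real_univ_mul_Gamma (E := E)
  have hdm : 0 < Gamma ((finrank ℝ E + m) / 2) := Gamma_pos_of_pos (by linarith)
  have hS : (volume : Measure E).toSphere.real univ ≠ 0 :=
    left_ne_zero_of_mul (hmass.trans_ne (by positivity))
  rw [average_eq, integral_exp_neg_norm_sq_smul_of_homogeneous volume hm hf, smul_smul]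
  congr 1
  field_simp
  linarith

end PolarCoordinates

section OrthogonalSlicing

variable {E F : Type*} [NormedAddCommGroup E] [InnerProductSpace ℝ E]
  [NormedAddCommGroup F] [NormedSpace ℝ F] {g : E}

lemma inner_smul_add_orthogonal (hg : ‖g‖ = 1) (t : ℝ) (y : (ℝ ∙ g)ᗮ) :
    ⟪g, t • g + (y : E)⟫ = t := by
  simp [inner_add_right, inner_smul_right, hg,
    Submodule.mem_orthogonal_singleton_iff_inner_right.1 y.2]

lemma norm_smul_add_orthogonal (hg : ‖g‖ = 1) (t : ℝ) (y : (ℝ ∙ g)ᗮ) :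
    ‖t • g + (y : E)‖ = √(t ^ 2 + ‖y‖ ^ 2) := by
  have horth : ⟪t • g, (y : E)⟫ = 0 := by
    rw [real_inner_smul_left, Submodule.mem_orthogonal_singleton_iff_inner_right.1 y.2, mul_zero]
  rw [← sqrt_sq (norm_nonneg (t • g + (y : E))), norm_add_sq_real, horth]
  simp [norm_smul, hg]

variable [FiniteDimensional ℝ E]

lemma cast_finrank_orthogonal_span_singleton (hg : g ≠ 0) :
    (finrank ℝ (ℝ ∙ g)ᗮ : ℝ) = finrank ℝ E - 1 := by
  rw [← (ℝ ∙ g).finrank_add_finrank_orthogonal, finrank_span_singleton hg]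
  simp

variable [MeasurableSpace E] [BorelSpace E]

/-- Cylindrical coordinates along a unit vector `g`: the pair `(y, t)` of a vector `y` orthogonal
to `g` and a height `t` corresponds to `t • g + y`. -/
noncomputable def cylindricalEquiv (hg : ‖g‖ = 1) : (ℝ ∙ g)ᗮ × ℝ ≃ᵐ E :=
  MeasurableEquiv.prodComm.trans <|
    (MeasurableEquiv.prodCongr
      (LinearIsometryEquiv.toSpanUnitSingleton (𝕜 := ℝ) g hg).toHomeomorph.toMeasurableEquiv
      (.refl _)).trans <|
    (MeasurableEquiv.toLp 2 _).trans
      (ℝ ∙ g).orthogonalDecomposition.symm.toHomeomorph.toMeasurableEquiv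

lemma cylindricalEquiv_apply (hg : ‖g‖ = 1) (p : (ℝ ∙ g)ᗮ × ℝ) :
    cylindricalEquiv hg p = p.2 • g + (p.1 : E) := by
  simp [cylindricalEquiv, MeasurableEquiv.prodCongr, MeasurableEquiv.prodComm]

lemma measurePreserving_cylindricalEquiv (hg : ‖g‖ = 1) :
    MeasurePreserving (cylindricalEquiv hg) :=
  (ℝ ∙ g).orthogonalDecomposition.symm.measurePreserving.comp <|
    (WithLp.volume_preserving_toLp _ _).comp <|
    ((LinearIsometryEquiv.toSpanUnitSingleton (𝕜 := ℝ) g hg).measurePreserving.prod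
      (.id volume)).comp Measure.measurePreserving_swap

lemma integral_eq_integral_orthogonal_integral (hg : ‖g‖ = 1) {f : E → F} (hf : Integrable f) :
    ∫ x, f x = ∫ y : (ℝ ∙ g)ᗮ, ∫ t : ℝ, f (t • g + (y : E)) := by
  have he := measurePreserving_cylindricalEquiv hg
  rw [← he.integral_comp', Measure.volume_eq_prod, integral_prod]
  · simp only [cylindricalEquiv_apply]
  · exact (he.integrable_comp_emb (cylindricalEquiv hg).measurableEmbedding).2 hf

lemma integral_fun_inner_norm (hg : ‖g‖ = 1) {φ : ℝ → ℝ → F}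
    (hφ : Integrable fun x : E ↦ φ ⟪g, x⟫ ‖x‖) :
    ∫ x : E, φ ⟪g, x⟫ ‖x‖ = ∫ y : (ℝ ∙ g)ᗮ, ∫ t : ℝ, φ t √(t ^ 2 + ‖y‖ ^ 2) := by
  rw [integral_eq_integral_orthogonal_integral hg hφ]
  simp only [inner_smul_add_orthogonal hg, norm_smul_add_orthogonal hg]

end OrthogonalSlicing

section Cone

/-- The height function of a circular cone: a point of norm `r` at height `t` along the axis lies
in the cone when the cosine `t / r` of its angle to the axis is at least `a`; outside the cone the
value is `0`. -/
noncomputable def coneHeight (a t r : ℝ) : ℝ := if a * r ≤ t then t else 0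

lemma coneHeight_mul_mul (a t r : ℝ) {c : ℝ} (hc : 0 < c) :
    coneHeight a (c * t) (c * r) = c * coneHeight a t r := by
  have hcone : a * (c * r) ≤ c * t ↔ a * r ≤ t := by
    rw [mul_left_comm, mul_le_mul_iff_right₀ hc]
  simp only [coneHeight, hcone, mul_ite, mul_zero]

lemma abs_coneHeight_le (a t r : ℝ) : |coneHeight a t r| ≤ |t| := by
  unfold coneHeight
  split_ifs <;> simp

lemma measurable_coneHeight (a : ℝ) : Measurable fun p : ℝ × ℝ ↦ coneHeight a p.1 p.2 :=
  .ite (measurableSet_le (by fun_prop) (by fun_prop)) measurable_fst measurable_const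

lemma mul_sqrt_le_iff_le_sin_arctan {a t q : ℝ} (hq : 0 < q) :
    a * √(t ^ 2 + q ^ 2) ≤ t ↔ a ≤ sin (arctan (t / q)) := by
  have hr : √(t ^ 2 + q ^ 2) = q * √(1 + (t / q) ^ 2) := by
    rw [← sqrt_sq hq.le, ← sqrt_mul (sq_nonneg _), sqrt_sq hq.le]
    congr 1
    field_simp
    ring
  rw [sin_arctan, le_div_iff₀ (by positivity), le_div_iff₀ hq, hr]
  ring_nf

lemma mul_sqrt_le_iff {a t q : ℝ} (ha : |a| < 1) (hq : 0 < q) :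
    a * √(t ^ 2 + q ^ 2) ≤ t ↔ a / √(1 - a ^ 2) * q ≤ t := by
  obtain ⟨ha₁, ha₂⟩ := abs_lt.1 ha
  have hsin : a = sin (arctan (a / √(1 - a ^ 2))) := by
    rw [← arcsin_eq_arctan ⟨ha₁, ha₂⟩, sin_arcsin ha₁.le ha₂.le]
  calc
    a * √(t ^ 2 + q ^ 2) ≤ t ↔ sin (arctan (a / √(1 - a ^ 2))) ≤ sin (arctan (t / q)) := by
      rw [mul_sqrt_le_iff_le_sin_arctan hq, ← hsin]
    _ ↔ a / √(1 - a ^ 2) ≤ t / q := sin_arctan_strictMono.le_iff_le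
    _ ↔ a / √(1 - a ^ 2) * q ≤ t := le_div_iff₀ hq

end Cone

section GaussianIntegrals

lemma integral_Ici_mul_exp_neg_sq (b : ℝ) :
    ∫ t in Ici b, t * rexp (-t ^ 2) = rexp (-b ^ 2) / 2 := by
  have hderiv (t : ℝ) (_ : t ∈ Ici b) :
      HasDerivAt (fun t ↦ -(rexp (-t ^ 2) / 2)) (t * rexp (-t ^ 2)) t := by
    convert! (((hasDerivAt_pow 2 t).neg.exp).div_const 2).neg using 1
    simp
    ring
  have hint : Integrable fun t : ℝ ↦ t * rexp (-t ^ 2) := by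
    simpa using integrable_mul_exp_neg_mul_sq one_pos
  have hlim : Filter.Tendsto (fun t : ℝ ↦ -(rexp (-t ^ 2) / 2)) .atTop (nhds 0) := by
    simpa [Function.comp_def] using ((tendsto_exp_neg_atTop_nhds_zero.comp
      (Filter.tendsto_pow_atTop two_ne_zero)).div_const 2).neg
  rw [integral_Ici_eq_integral_Ioi,
    integral_Ioi_of_hasDerivAt_of_tendsto' hderiv hint.integrableOn hlim]
  ring

lemma integral_mul_exp_neg_sq : ∫ t : ℝ, t * rexp (-t ^ 2) = 0 := by
  have h := integral_neg_eq_self (fun t : ℝ ↦ t * rexp (-t ^ 2)) volume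
  simp only [neg_mul, neg_sq, integral_neg] at h
  linarith

lemma exp_neg_sq_mul_coneHeight_sqrt (a t q : ℝ) :
    rexp (-√(t ^ 2 + q ^ 2) ^ 2) * coneHeight a t √(t ^ 2 + q ^ 2) =
      rexp (-q ^ 2) * if a * √(t ^ 2 + q ^ 2) ≤ t then t * rexp (-t ^ 2) else 0 := by
  rw [coneHeight, sq_sqrt (by positivity), neg_add, exp_add]
  split_ifs <;> ring

lemma integral_exp_neg_sq_mul_coneHeight_sqrt {a q : ℝ} (ha : |a| < 1) (hq : 0 < q) :
    ∫ t, rexp (-√(t ^ 2 + q ^ 2) ^ 2) * coneHeight a t √(t ^ 2 + q ^ 2) =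
      rexp (-(1 - a ^ 2)⁻¹ * q ^ 2) / 2 := by
  have hw : 0 < 1 - a ^ 2 := sub_pos.2 (sq_lt_one_iff_abs_lt_one a |>.2 ha)
  have hexp : -q ^ 2 + -(a / √(1 - a ^ 2) * q) ^ 2 = -(1 - a ^ 2)⁻¹ * q ^ 2 := by
    rw [mul_pow, div_pow, sq_sqrt hw.le]
    field_simp
    ring
  calc
    _ = rexp (-q ^ 2) * ∫ t in Ici (a / √(1 - a ^ 2) * q), t * rexp (-t ^ 2) := by
      rw [← integral_indicator measurableSet_Ici, ← integral_const_mul]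
      simp only [exp_neg_sq_mul_coneHeight_sqrt, mul_sqrt_le_iff ha hq, indicator, mem_Ici]
    _ = rexp (-(1 - a ^ 2)⁻¹ * q ^ 2) / 2 := by
      rw [integral_Ici_mul_exp_neg_sq, mul_div_assoc', ← exp_add, hexp]

lemma integral_exp_neg_sq_mul_coneHeight_sqrt_of_abs_eq_one {a q : ℝ} (ha : |a| = 1)
    (hq : 0 < q) :
    ∫ t, rexp (-√(t ^ 2 + q ^ 2) ^ 2) * coneHeight a t √(t ^ 2 + q ^ 2) = 0 := by
  simp only [exp_neg_sq_mul_coneHeight_sqrt, mul_sqrt_le_iff_le_sin_arctan hq]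
  rcases eq_or_eq_neg_of_abs_eq ha with rfl | rfl
  · have hsin (x : ℝ) : sin (arctan x) < 1 :=
      (sin_arctan_strictMono (lt_add_one x)).trans_le (sin_le_one _)
    simp [(hsin _).not_ge]
  · simp [neg_one_le_sin, integral_const_mul, integral_mul_exp_neg_sq]

variable {E : Type*} [NormedAddCommGroup E] [InnerProductSpace ℝ E] [FiniteDimensional ℝ E]
  [MeasurableSpace E] [BorelSpace E]

lemma integrable_norm_mul_exp_neg_norm_sq [Nontrivial E] :
    Integrable fun x : E ↦ ‖x‖ * rexp (-‖x‖ ^ 2) := by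
  refine (integrable_fun_norm_addHaar volume (f := fun r ↦ r * rexp (-r ^ 2))).2 ?_
  have hdim : finrank ℝ E - 1 + 1 = finrank ℝ E := Nat.sub_add_cancel finrank_pos
  have h := integrableOn_rpow_mul_exp_neg_mul_sq one_pos (s := finrank ℝ E)
    (neg_one_lt_zero.trans_le (Nat.cast_nonneg _))
  simpa [← mul_assoc, ← pow_succ, hdim] using h

lemma integrable_exp_neg_norm_sq_mul_coneHeight [Nontrivial E] (a : ℝ) (g : E) :
    Integrable fun x : E ↦ rexp (-‖x‖ ^ 2) * coneHeight a ⟪g, x⟫ ‖x‖ := by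
  refine (integrable_norm_mul_exp_neg_norm_sq.const_mul ‖g‖).mono' ?_ (.of_forall fun x ↦ ?_)
  · exact (Measurable.mul (by fun_prop) ((measurable_coneHeight a).comp
      (f := fun x : E ↦ (⟪g, x⟫, ‖x‖)) (by fun_prop))).aestronglyMeasurable
  · calc
      ‖rexp (-‖x‖ ^ 2) * coneHeight a ⟪g, x⟫ ‖x‖‖
        = rexp (-‖x‖ ^ 2) * |coneHeight a ⟪g, x⟫ ‖x‖| := by simp [abs_exp]
      _ ≤ rexp (-‖x‖ ^ 2) * (‖g‖ * ‖x‖) := by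
        gcongr
        exact (abs_coneHeight_le _ _ _).trans (abs_real_inner_le_norm g x)
      _ = ‖g‖ * (‖x‖ * rexp (-‖x‖ ^ 2)) := by ring

variable {g : E} {a : ℝ}

lemma integral_exp_neg_norm_sq_mul_coneHeight (hE : 2 ≤ finrank ℝ E) (hg : ‖g‖ = 1)
    (ha : |a| ≤ 1) :
    ∫ x : E, rexp (-‖x‖ ^ 2) * coneHeight a ⟪g, x⟫ ‖x‖ =
      (π * (1 - a ^ 2)) ^ ((finrank ℝ E - 1) / 2 : ℝ) / 2 := by
  have hg0 : g ≠ 0 := norm_ne_zero_iff.1 (by simp [hg])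
  have hdim := cast_finrank_orthogonal_span_singleton hg0
  have hE' : (2 : ℝ) ≤ finrank ℝ E := by exact_mod_cast hE
  have : Nontrivial E := ⟨g, 0, hg0⟩
  have : Nontrivial (ℝ ∙ g)ᗮ := nontrivial_of_finrank_pos (R := ℝ) <| by
    rw [← Nat.cast_pos (α := ℝ), hdim]
    linarith
  have off_axis : ∀ᵐ y : (ℝ ∙ g)ᗮ, 0 < ‖y‖ :=
    (Measure.ae_ne volume 0).mono fun _ ↦ norm_pos_iff.2
  rw [integral_fun_inner_norm hg (integrable_exp_neg_norm_sq_mul_coneHeight a g)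
    (φ := fun t r ↦ rexp (-r ^ 2) * coneHeight a t r)]
  rcases ha.lt_or_eq with ha | ha
  · have hw : 0 < (1 - a ^ 2)⁻¹ := inv_pos.2 (sub_pos.2 ((sq_lt_one_iff_abs_lt_one a).2 ha))
    rw [integral_congr_ae (off_axis.mono fun y ↦ integral_exp_neg_sq_mul_coneHeight_sqrt ha),
      integral_div, GaussianFourier.integral_rexp_neg_mul_sq_norm hw, div_inv_eq_mul, hdim]
  · rw [integral_eq_zero_of_ae (off_axis.mono fun y ↦
        integral_exp_neg_sq_mul_coneHeight_sqrt_of_abs_eq_one ha),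
      ← sq_abs, ha, one_pow, sub_self, mul_zero, zero_rpow (by linarith), zero_div]

end GaussianIntegrals

section SphericalCaps

variable {E : Type*} [NormedAddCommGroup E] [InnerProductSpace ℝ E] [FiniteDimensional ℝ E]
  [MeasurableSpace E] [BorelSpace E] {g : E}

lemma average_toSphere_inner_mul_ite_le (hE : 2 ≤ finrank ℝ E) (hg : ‖g‖ = 1) {a : ℝ}
    (ha : |a| ≤ 1) :
    ⨍ u : sphere (0 : E) 1, ⟪g, (u : E)⟫ * (if a ≤ ⟪g, (u : E)⟫ then 1 else 0)
        ∂(volume : Measure E).toSphere =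
      Gamma (finrank ℝ E / 2) * (1 - a ^ 2) ^ ((finrank ℝ E - 1) / 2 : ℝ) /
        (2 * √π * Gamma ((finrank ℝ E + 1) / 2)) := by
  have : Nontrivial E := ⟨g, 0, norm_ne_zero_iff.1 (by simp [hg])⟩
  have homogeneous (x : E) (r : ℝ) (hr : 0 < r) : coneHeight a ⟪g, r • x⟫ ‖r • x‖ =
      r ^ (1 : ℝ) • coneHeight a ⟪g, x⟫ ‖x‖ := by
    rw [real_inner_smul_right, norm_smul, norm_of_nonneg hr.le, coneHeight_mul_mul _ _ _ hr,
      rpow_one, smul_eq_mul]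
  have hw : 0 ≤ 1 - a ^ 2 := sub_nonneg.2 ((sq_le_one_iff_abs_le_one a).2 ha)
  have hπ : π ^ (finrank ℝ E / 2 : ℝ) = π ^ ((finrank ℝ E - 1) / 2 : ℝ) * √π := by
    rw [sqrt_eq_rpow, ← rpow_add pi_pos]
    ring_nf
  calc
    _ = ⨍ u : sphere (0 : E) 1, coneHeight a ⟪g, (u : E)⟫ ‖(u : E)‖
          ∂(volume : Measure E).toSphere := by simp [coneHeight]
    _ = Gamma (finrank ℝ E / 2) / (π ^ (finrank ℝ E / 2 : ℝ) * Gamma ((finrank ℝ E + 1) / 2)) *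
          ((π * (1 - a ^ 2)) ^ ((finrank ℝ E - 1) / 2 : ℝ) / 2) := by
      rw [average_toSphere_of_homogeneous (f := fun x ↦ coneHeight a ⟪g, x⟫ ‖x‖)
        (by linarith [(finrank ℝ E).cast_nonneg (α := ℝ)]) homogeneous]
      simp only [smul_eq_mul, integral_exp_neg_norm_sq_mul_coneHeight hE hg ha]
    _ = _ := by
      rw [mul_rpow pi_pos.le hw, hπ]
      field_simp

theorem spherical_cap_inner_expectations_general (hE : 2 ≤ finrank ℝ E) (hg : ‖g‖ = 1) {s : ℝ}
    (hs : |s| ≤ 1) :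
    ⨍ u : sphere (0 : E) 1, ⟪g, (u : E)⟫ * (if -s ≤ ⟪g, (u : E)⟫ then 1 else 0)
        ∂(volume : Measure E).toSphere =
      Gamma (finrank ℝ E / 2) * (1 - s ^ 2) ^ ((finrank ℝ E - 1) / 2 : ℝ) /
        (2 * √π * Gamma ((finrank ℝ E + 1) / 2)) ∧
    ⨍ u : sphere (0 : E) 1, ⟪g, (u : E)⟫ * (if ⟪g, (u : E)⟫ ≤ -s then 1 else 0)
        ∂(volume : Measure E).toSphere =
      -(Gamma (finrank ℝ E / 2) * (1 - s ^ 2) ^ ((finrank ℝ E - 1) / 2 : ℝ) /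
        (2 * √π * Gamma ((finrank ℝ E + 1) / 2))) := by
  constructor
  · simpa using average_toSphere_inner_mul_ite_le hE hg (a := -s) (by simpa)
  · have lower_cap_eq_neg_upper_cap (u : sphere (0 : E) 1) :
        ⟪g, (u : E)⟫ * (if ⟪g, (u : E)⟫ ≤ -s then 1 else 0) =
          -(⟪-g, (u : E)⟫ * (if s ≤ ⟪-g, (u : E)⟫ then 1 else 0)) := by
      simp only [inner_neg_left, le_neg]
      ring
    simp_rw [lower_cap_eq_neg_upper_cap]
    rw [average_neg, average_toSphere_inner_mul_ite_le hE (by simpa) hs]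

end SphericalCaps

/-- For a unit vector `g ∈ ℝ^d` (`d ≥ 2`), `u` uniform on `S^{d-1}` and `s ∈ [0,1]`:
`E[⟨g,u⟩·1{⟨g,u⟩ ≥ -s}] = Γ(d/2)·(1-s²)^((d-1)/2)/(2√π·Γ((d+1)/2))` and
`E[⟨g,u⟩·1{⟨g,u⟩ ≤ -s}] = −Γ(d/2)·(1-s²)^((d-1)/2)/(2√π·Γ((d+1)/2))`. -/
theorem spherical_cap_inner_expectations
    (d : ℕ) (hd : 2 ≤ d) (g : EuclideanSpace ℝ (Fin d)) (hg : ‖g‖ = 1)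
    (s : ℝ) (hs : s ∈ Set.Icc (0 : ℝ) 1) :
    (∫ u : (sphere (0 : EuclideanSpace ℝ (Fin d)) 1),
        (⟪g, (u : EuclideanSpace ℝ (Fin d))⟫ *
          (if -s ≤ ⟪g, (u : EuclideanSpace ℝ (Fin d))⟫ then (1 : ℝ) else 0))
        ∂(sphereUniform d))
      = Real.Gamma ((d : ℝ) / 2) * (1 - s ^ 2) ^ (((d : ℝ) - 1) / 2)
        / (2 * Real.sqrt π * Real.Gamma (((d : ℝ) + 1) / 2)) ∧
    (∫ u : (sphere (0 : EuclideanSpace ℝ (Fin d)) 1),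
        (⟪g, (u : EuclideanSpace ℝ (Fin d))⟫ *
          (if ⟪g, (u : EuclideanSpace ℝ (Fin d))⟫ ≤ -s then (1 : ℝ) else 0))
        ∂(sphereUniform d))
      = -(Real.Gamma ((d : ℝ) / 2) * (1 - s ^ 2) ^ (((d : ℝ) - 1) / 2)
        / (2 * Real.sqrt π * Real.Gamma (((d : ℝ) + 1) / 2))) := by
  have hE : finrank ℝ (EuclideanSpace ℝ (Fin d)) = d := finrank_euclideanSpace_fin
  have h := spherical_cap_inner_expectations_general (hd.trans_eq hE.symm) hg
    (abs_le.2 ⟨neg_one_lt_zero.le.trans hs.1, hs.2⟩)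
  rwa [hE] at h
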